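/- arXiv:2512.13445 — 2 statements merged into one kernel-verified Lean document; each statement's English description precedes it below -/
import Mathlib

section
/- Let F be a field with more than k elements, and let n ≥ k ≥ 2 with n + k odd. Then the radical of the Cullis determinant det_{n,k} : M_{n×k}(F) → F equals W_{n,k}, the space of n×k matrices all of whose rows are equal. -/
open Classical in
noncomputable def cullisDet {F : Type*} [Field F] {n k : ℕ}
    (X : Matrix (Fin n) (Fin k) F) : F :=
  ∑ f : Fin k → Fin n, if StrictMono f then
    (-1 : F) ^ (∑ j : Fin k, ((f j : ℕ) - (j : ℕ))) * (X.submatrix f id).det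
  else 0

/-!
Regarded as a function of its columns, the Cullis determinant is an alternating form `D`. Let `y`
be the `j`-th column of a matrix `Y` in its radical. If `Z` is any matrix with `j`-th column `y`,
then `Z - Y` has a zero column, so `D Z = D (Z - Y) = 0`: every column of `Y` lies in the kernel
`{y | D (y, -) = 0}`. Conversely, multilinearity puts any `Y` with columns in the kernel into the
radical. It remains to determine the kernel, by Laplace expansion along the first row: the
all-ones column lies in it when `n + k` is odd, and for `2 ≤ k` and every pair of adjacent rows
`a`, `a + 1` there are columns `v` such that `D (y, v)` equals `y a - y (a + 1)` up to sign.
-/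

open Matrix (vecCons vecTail)

section AlternatingMap

theorem alternatingMap_sum_apply {R M N ι κ : Type*} [Semiring R] [AddCommMonoid M] [Module R M]
    [AddCommMonoid N] [Module R N] (s : Finset κ) (f : κ → M [⋀^ι]→ₗ[R] N) (v : ι → M) :
    (∑ a ∈ s, f a) v = ∑ a ∈ s, f a v :=
  map_sum (⟨⟨fun g => g v, rfl⟩, fun _ _ => rfl⟩ : M [⋀^ι]→ₗ[R] N →+ N) f s

variable {R M N : Type*} [CommRing R] [AddCommGroup M] [Module R M] [AddCommGroup N] [Module R N]
  {k : ℕ} {f : M [⋀^Fin (k + 1)]→ₗ[R] N} {x y : Fin (k + 1) → M}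

theorem map_eq_zero_of_curryLeft_eq_zero {j : Fin (k + 1)} (h : f.curryLeft (x j) = 0) :
    f x = 0 := by
  rw [← j.insertNth_self_removeNth x, f.map_insertNth, ← f.curryLeft_apply_apply, h,
    AlternatingMap.zero_apply, smul_zero]

theorem curryLeft_eq_zero_of_forall_map_add_eq (h : ∀ x, f (x + y) = f x) (j : Fin (k + 1)) :
    f.curryLeft (y j) = 0 := by
  ext v
  set z : Fin (k + 1) → M := j.insertNth (y j) v with hz
  have hfz : f z = 0 := by
    rw [← sub_add_cancel z y, h]
    exact f.map_coord_zero j (by simp [hz])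
  rw [f.curryLeft_apply_apply, ← f.neg_one_pow_smul_map_insertNth j, ← hz, hfz, smul_zero,
    AlternatingMap.zero_apply]

theorem map_add_eq_of_forall_curryLeft_eq_zero (h : ∀ j, f.curryLeft (y j) = 0) :
    f (x + y) = f x := by
  have telescope := f.toMultilinearMap.map_sub_map_piecewise (x + y) x Finset.univ
  simp only [Finset.piecewise_univ, Finset.mem_univ, forall_const] at telescope
  refine sub_eq_zero.1 (telescope.trans (Finset.sum_eq_zero fun j _ => ?_))
  exact map_eq_zero_of_curryLeft_eq_zero (j := j) (by simpa using h j)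

theorem forall_map_add_smul_eq_iff :
    (∀ x (l : R), f (x + l • y) = f x) ↔ ∀ j, f.curryLeft (y j) = 0 := by
  refine ⟨fun h => curryLeft_eq_zero_of_forall_map_add_eq fun x => by simpa using h x 1,
    fun h x l => map_add_eq_of_forall_curryLeft_eq_zero fun j => ?_⟩
  rw [Pi.smul_apply, map_smul, h, smul_zero]

end AlternatingMap

section StrictMono

variable {n k : ℕ}

theorem val_le_val_apply_of_strictMono {f : Fin k → Fin n} (hf : StrictMono f) (j : Fin k) :
    (j : ℕ) ≤ f j := by
  simpa using Finset.card_le_card_of_injOn (s := Finset.Iio j) (t := Finset.Iio (f j)) f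
    (fun i hi => by simpa using hf (by simpa using hi)) hf.injective.injOn

theorem exists_eq_succ_comp {f : Fin k → Fin (n + 1)} (h : ∀ j, f j ≠ 0) :
    ∃ g : Fin k → Fin n, f = Fin.succ ∘ g :=
  ⟨fun j => (f j).pred (h j), by ext; simp⟩

theorem strictMono_succ_comp_iff {g : Fin k → Fin n} :
    StrictMono (Fin.succ ∘ g) ↔ StrictMono g :=
  ⟨fun h _ _ hij => Fin.succ_lt_succ_iff.1 (h hij), Fin.strictMono_succ.comp⟩

theorem strictMono_vecCons_zero_succ_comp_iff {g : Fin k → Fin n} :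
    StrictMono (vecCons 0 (Fin.succ ∘ g)) ↔ StrictMono g := by
  refine ⟨fun h i j hij => Fin.succ_lt_succ_iff.1 (h (Fin.succ_lt_succ_iff.2 hij)), fun h => ?_⟩
  cases k with
  | zero => exact Subsingleton.strictMono _
  | succ k => exact strictMono_vecCons.2 ⟨Fin.succ_pos _, Fin.strictMono_succ.comp h⟩

open Finset in
theorem sum_strictMono_succ_succ {M : Type*} [AddCommMonoid M]
    (G : (Fin (k + 1) → Fin (n + 1)) → M) :
    ∑ f with StrictMono f, G f =
      ∑ g : Fin (k + 1) → Fin n with StrictMono g, G (Fin.succ ∘ g) +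
        ∑ g : Fin k → Fin n with StrictMono g, G (vecCons 0 (Fin.succ ∘ g)) := by
  rw [← sum_filter_not_add_sum_filter _ (fun f => f 0 = 0)]
  simp only [filter_filter]
  congr 1 <;> symm
  · refine sum_bij (fun g _ => Fin.succ ∘ g) ?_ ?_ ?_ fun _ _ => rfl
    · intro g hg
      simpa [strictMono_succ_comp_iff] using hg
    · exact fun g _ g' _ h => (Fin.succ_injective n).comp_left h
    · intro f hf
      obtain ⟨hf, hf0⟩ : StrictMono f ∧ f 0 ≠ 0 := by simpa using hf
      obtain ⟨g, rfl⟩ := exists_eq_succ_comp fun j =>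
        ((Fin.pos_iff_ne_zero.2 hf0).trans_le (hf.monotone j.zero_le)).ne'
      exact ⟨g, by simpa [strictMono_succ_comp_iff] using hf, rfl⟩
  · refine sum_bij (fun g _ => vecCons 0 (Fin.succ ∘ g)) ?_ ?_ ?_ fun _ _ => rfl
    · intro g hg
      simpa [strictMono_vecCons_zero_succ_comp_iff] using hg
    · exact fun g _ g' _ h => (Fin.succ_injective n).comp_left (Matrix.vecCons_inj.1 h).2
    · intro f hf
      obtain ⟨hf, hf0⟩ : StrictMono f ∧ f 0 = 0 := by simpa using hf
      obtain ⟨g, hg⟩ := exists_eq_succ_comp (f := vecTail f) fun j => (hf0 ▸ hf j.succ_pos).ne'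
      obtain rfl : vecCons 0 (Fin.succ ∘ g) = f := by
        rw [← hg, ← hf0]
        exact Matrix.cons_head_tail f
      exact ⟨g, by simpa [strictMono_vecCons_zero_succ_comp_iff] using hf, rfl⟩

theorem sum_val_succ_comp_sub {g : Fin k → Fin n} (hg : StrictMono g) :
    ∑ j, ((g j).succ - j : ℕ) = k + ∑ j, (g j - j : ℕ) := by
  have h (j : Fin k) : ((g j).succ - j : ℕ) = 1 + (g j - j) := by
    rw [Fin.val_succ, add_comm, Nat.add_sub_assoc (val_le_val_apply_of_strictMono hg j)]
  simp only [h, Finset.sum_add_distrib, Finset.sum_const, Finset.card_univ, Fintype.card_fin,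
    smul_eq_mul, mul_one]

theorem sum_val_vecCons_zero_succ_comp_sub (g : Fin k → Fin n) :
    ∑ j, ((vecCons 0 (Fin.succ ∘ g) : Fin (k + 1) → Fin (n + 1)) j - j : ℕ) =
      ∑ j, (g j - j : ℕ) := by
  simp [Fin.sum_univ_succ]

end StrictMono

section CullisForm

variable {R : Type*} [CommRing R] {n k : ℕ}

variable (R n k) in
/-- The Cullis determinant as an alternating form in the columns of the matrix: a `k`-tuple `v`
stands for the `n × k` matrix with columns `v 0, …, v (k - 1)`. -/
noncomputable def cullisForm : (Fin n → R) [⋀^Fin k]→ₗ[R] R :=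
  ∑ f : Fin k → Fin n with StrictMono f, (-1 : R) ^ (∑ j, (f j - j : ℕ)) •
    Matrix.detRowAlternating.compLinearMap (LinearMap.funLeft R R f)

theorem cullisForm_apply (v : Fin k → Fin n → R) :
    cullisForm R n k v = ∑ f : Fin k → Fin n with StrictMono f,
      (-1) ^ (∑ j, (f j - j : ℕ)) * (Matrix.of fun j => v j ∘ f).det :=
  alternatingMap_sum_apply _ _ _

theorem cullisDet_eq_cullisForm_col {F : Type*} [Field F] (X : Matrix (Fin n) (Fin k) F) :
    cullisDet X = cullisForm F n k X.col := by
  rw [cullisDet, cullisForm_apply, Finset.sum_filter]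
  simp only [← Matrix.det_transpose (X.submatrix _ _)]
  rfl

theorem cullisForm_zero_right (v : Fin 0 → Fin n → R) : cullisForm R n 0 v = 1 := by
  simp [cullisForm_apply, Subsingleton.strictMono]

theorem cullisForm_zero_left : cullisForm R 0 (k + 1) = 0 := by
  ext v
  simp [cullisForm_apply]

theorem cullisForm_succ_succ (v : Fin (k + 1) → Fin (n + 1) → R) :
    cullisForm R (n + 1) (k + 1) v =
      (-1) ^ (k + 1) * cullisForm R n (k + 1) (vecTail ∘ v) +
        ∑ j : Fin (k + 1), (-1) ^ (j : ℕ) * v j 0 *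
          cullisForm R n k (vecTail ∘ v ∘ j.succAbove) := by
  simp only [cullisForm_apply, sum_strictMono_succ_succ, Finset.mul_sum]
  congr 1
  · refine Finset.sum_congr rfl fun g hg => ?_
    simp only [Function.comp_apply]
    rw [sum_val_succ_comp_sub (by simpa using hg), pow_add, mul_assoc]
    rfl
  · rw [Finset.sum_comm]
    refine Finset.sum_congr rfl fun g _ => ?_
    rw [sum_val_vecCons_zero_succ_comp_sub, Matrix.det_succ_column_zero, Finset.mul_sum]
    refine Finset.sum_congr rfl fun j _ => ?_
    rw [mul_left_comm]
    rfl

theorem vecTail_comp_vecCons {α : Type*} (y : Fin (n + 1) → α) (v : Fin k → Fin (n + 1) → α) :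
    vecTail ∘ vecCons y v = vecCons (vecTail y) (vecTail ∘ v) :=
  Fin.comp_cons _ _ _

theorem cullisForm_vecCons (y : Fin (n + 1) → R) (v : Fin (k + 1) → Fin (n + 1) → R) :
    cullisForm R (n + 1) (k + 2) (vecCons y v) =
      (-1) ^ k * cullisForm R n (k + 2) (vecCons (vecTail y) (vecTail ∘ v)) +
        y 0 * cullisForm R n (k + 1) (vecTail ∘ v) -
        ∑ j : Fin (k + 1), (-1) ^ (j : ℕ) * v j 0 *
          cullisForm R n (k + 1) (vecCons (vecTail y) (vecTail ∘ v ∘ j.succAbove)) := by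
  have h_first : vecTail ∘ vecCons y v ∘ Fin.succAbove 0 = vecTail ∘ v := rfl
  have h_succ (j : Fin (k + 1)) : vecTail ∘ vecCons y v ∘ j.succ.succAbove =
      vecCons (vecTail y) (vecTail ∘ v ∘ j.succAbove) := by
    rw [← vecTail_comp_vecCons]
    exact congrArg _ (Fin.cons_comp_succ_succAbove y v j)
  rw [cullisForm_succ_succ, Fin.sum_univ_succ, h_first]
  simp [h_succ, vecTail_comp_vecCons, pow_succ, add_assoc, sub_eq_add_neg]

theorem cullisForm_vecCons_one (v : Fin k → Fin n → R) :
    cullisForm R n (k + 1) (vecCons 1 v) =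
      if Even (n + k) then 0 else (-1) ^ k * cullisForm R n k v := by
  induction n generalizing k with
  | zero => cases k <;> simp [cullisForm_zero_left]
  | succ n ih =>
    have vecTail_one : vecTail (1 : Fin (n + 1) → R) = 1 := rfl
    cases k with
    | zero =>
      rw [cullisForm_succ_succ, vecTail_comp_vecCons, vecTail_one, ih]
      by_cases h : Even n <;> simp [h, Nat.even_add_one, cullisForm_zero_right]
    | succ k =>
      have sign : (-1 : R) ^ k * (-1) ^ k = 1 := by simp [← mul_pow]
      simp only [cullisForm_vecCons, vecTail_one, ih, Pi.one_apply]
      by_cases h : Even (n + k)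
      · have h₁ : ¬Even (n + (k + 1)) := by grind
        have h₂ : Even (n + 1 + (k + 1)) := by grind
        simp only [if_pos h, if_neg h₁, if_pos h₂, mul_zero, Finset.sum_const_zero]
        linear_combination -cullisForm R n (k + 1) (vecTail ∘ v) * sign
      · have h₁ : Even (n + (k + 1)) := by grind
        have h₂ : ¬Even (n + 1 + (k + 1)) := by grind
        simp only [if_neg h, if_pos h₁, if_neg h₂, cullisForm_succ_succ,
          mul_left_comm _ ((-1 : R) ^ k), ← Finset.mul_sum]
        linear_combination -cullisForm R n (k + 1) (vecTail ∘ v) * sign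

theorem cullisForm_vecCons_zero_comp (y : Fin (n + 1) → R) (v : Fin k → Fin n → R) :
    cullisForm R (n + 1) (k + 1) (vecCons y (vecCons 0 ∘ v)) =
      (-1) ^ (k + 1) * cullisForm R n (k + 1) (vecCons (vecTail y) v) +
        y 0 * cullisForm R n k v := by
  rw [cullisForm_succ_succ, Fin.sum_univ_succ, vecTail_comp_vecCons]
  simp only [Fin.val_zero, pow_zero, one_mul, Fin.succAbove_zero, Function.comp_apply,
    Matrix.cons_val_zero, Matrix.cons_val_succ, mul_zero, zero_mul, Finset.sum_const_zero, add_zero]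
  rfl

theorem cullisForm_zero_comp (v : Fin k → Fin n → R) :
    cullisForm R (n + 1) k (vecCons 0 ∘ v) = (-1) ^ k * cullisForm R n k v := by
  cases k with
  | zero => simp [cullisForm_zero_right]
  | succ k =>
    rw [cullisForm_succ_succ]
    simp only [Function.comp_apply, Matrix.cons_val_zero, mul_zero, zero_mul,
      Finset.sum_const_zero, add_zero]
    rfl

theorem cullisForm_vecCons_single_zero_comp (v : Fin k → Fin n → R) :
    cullisForm R (n + 1) (k + 1) (vecCons (vecCons 1 0) (vecCons 0 ∘ v)) = cullisForm R n k v := by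
  have h : cullisForm R n (k + 1) (vecCons 0 v) = 0 := AlternatingMap.map_coord_zero _ 0 rfl
  simp [cullisForm_vecCons_zero_comp, h]

theorem cullisForm_vecCons_vecCons_one_zero_comp (y : Fin (n + 1) → R) (x : Fin n → R)
    (v : Fin k → Fin n → R) :
    cullisForm R (n + 1) (k + 2) (vecCons y (vecCons (vecCons 1 x) (vecCons 0 ∘ v))) =
      (-1) ^ k * cullisForm R n (k + 2) (vecCons (vecTail y) (vecCons x v)) +
        y 0 * cullisForm R n (k + 1) (vecCons x v) -
        cullisForm R n (k + 1) (vecCons (vecTail y) v) := by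
  rw [cullisForm_vecCons, Fin.sum_univ_succ, vecTail_comp_vecCons]
  simp only [Matrix.tail_cons, Fin.val_zero, pow_zero, one_mul, mul_one, Fin.succAbove_zero,
    Function.comp_apply, Matrix.cons_val_zero, Matrix.cons_val_succ, mul_zero, zero_mul,
    Finset.sum_const_zero, add_zero]
  rfl

theorem cullisForm_vecCons_vecCons_single_zero_comp (y : Fin (n + 1) → R) (v : Fin k → Fin n → R) :
    cullisForm R (n + 1) (k + 2) (vecCons y (vecCons (vecCons 1 0) (vecCons 0 ∘ v))) =
      -cullisForm R n (k + 1) (vecCons (vecTail y) v) := by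
  have h₁ : cullisForm R n (k + 2) (vecCons (vecTail y) (vecCons 0 v)) = 0 :=
    AlternatingMap.map_coord_zero _ 1 rfl
  have h₂ : cullisForm R n (k + 1) (vecCons 0 v) = 0 := AlternatingMap.map_coord_zero _ 0 rfl
  simp [cullisForm_vecCons_vecCons_one_zero_comp, h₁, h₂]

theorem exists_cullisForm_eq_one (hkn : k ≤ n) : ∃ v, cullisForm R n k v = 1 := by
  induction k generalizing n with
  | zero => exact ⟨![], cullisForm_zero_right _⟩
  | succ k ih =>
    obtain ⟨n, rfl⟩ := Nat.exists_eq_add_of_le' (Nat.one_le_of_lt hkn)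
    obtain ⟨v, hv⟩ := ih (Nat.le_of_succ_le_succ hkn)
    exact ⟨_, (cullisForm_vecCons_single_zero_comp v).trans hv⟩

theorem cullisForm_vecCons_one_one_zero_comp (v : Fin k → Fin n → R) :
    cullisForm R (n + 2) (k + 1)
      (vecCons (vecCons 1 (vecCons 1 0)) (vecCons 0 ∘ vecCons 0 ∘ v)) = 0 := by
  rw [cullisForm_vecCons_zero_comp]
  simp [cullisForm_vecCons_single_zero_comp, cullisForm_zero_comp, pow_succ]

theorem cullisForm_vecCons_vecCons_one_one_zero_comp (y : Fin (n + 2) → R) (v : Fin k → Fin n → R) :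
    cullisForm R (n + 2) (k + 2)
      (vecCons y (vecCons (vecCons 1 (vecCons 1 0)) (vecCons 0 ∘ vecCons 0 ∘ v))) =
        (y 0 - y 1) * cullisForm R n k v := by
  have h : vecTail y 0 = y 1 := rfl
  rw [cullisForm_vecCons_vecCons_one_zero_comp, cullisForm_vecCons_vecCons_single_zero_comp,
    cullisForm_vecCons_single_zero_comp, cullisForm_vecCons_zero_comp, h]
  ring

theorem exists_adjacent_eq_of_cullisForm_vecCons_eq_zero (hkn : k + 1 ≤ n) (a : Fin n) :
    ∃ v : Fin (k + 1) → Fin (n + 1) → R, cullisForm R (n + 1) (k + 1) v = 0 ∧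
      ∀ y, cullisForm R (n + 1) (k + 2) (vecCons y v) = 0 → y a.castSucc = y a.succ := by
  induction n generalizing k with
  | zero => exact a.elim0
  | succ n ih =>
    cases a using Fin.cases with
    | zero =>
      obtain ⟨w, hw⟩ := exists_cullisForm_eq_one (R := R) (Nat.le_of_succ_le_succ hkn)
      refine ⟨_, cullisForm_vecCons_one_one_zero_comp w, fun y hy => ?_⟩
      rw [cullisForm_vecCons_vecCons_one_one_zero_comp, hw, mul_one] at hy
      exact sub_eq_zero.1 hy
    | succ a =>
      obtain hkn' | rfl := (Nat.le_of_succ_le_succ hkn).lt_or_eq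
      · obtain ⟨v, hv, hy⟩ := ih hkn' a
        refine ⟨vecCons 0 ∘ v, by rw [cullisForm_zero_comp, hv, mul_zero], fun y h => ?_⟩
        rw [cullisForm_vecCons_zero_comp, hv, mul_zero, add_zero, neg_one_pow_mul_eq_zero_iff] at h
        exact hy (vecTail y) h
      · cases k with
        | zero => exact a.elim0
        | succ k =>
          obtain ⟨v, hv, hy⟩ := ih le_rfl a
          refine ⟨_, (cullisForm_vecCons_single_zero_comp v).trans hv, fun y h => ?_⟩
          rw [cullisForm_vecCons_vecCons_single_zero_comp, neg_eq_zero] at h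
          exact hy (vecTail y) h

theorem cullisForm_curryLeft_const (h : Even (n + k)) (c : R) :
    (cullisForm R n (k + 1)).curryLeft (fun _ => c) = 0 := by
  have h_one : (cullisForm R n (k + 1)).curryLeft 1 = 0 := by
    ext v
    rw [AlternatingMap.curryLeft_apply_apply, cullisForm_vecCons_one, if_pos h,
      AlternatingMap.zero_apply]
  have h_smul : (fun _ : Fin n => c) = c • 1 := by ext; simp
  rw [h_smul, map_smul, h_one, smul_zero]

theorem cullisForm_curryLeft_eq_zero_iff (hk : 1 ≤ k) (hkn : k + 1 ≤ n) (h : Even (n + k))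
    {y : Fin n → R} :
    (cullisForm R n (k + 1)).curryLeft y = 0 ↔ ∀ i i', y i = y i' := by
  obtain ⟨k, rfl⟩ := Nat.exists_eq_add_of_le' hk
  obtain ⟨n, rfl⟩ := Nat.exists_eq_add_of_le' (Nat.one_le_of_lt hkn)
  refine ⟨fun hy => ?_, fun hy => ?_⟩
  · have adjacent (a : Fin n) : y a.castSucc = y a.succ := by
      obtain ⟨v, -, hv⟩ :=
        exists_adjacent_eq_of_cullisForm_vecCons_eq_zero (R := R) (Nat.le_of_succ_le_succ hkn) a
      exact hv y (DFunLike.congr_fun hy v)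
    have eq_zero (i) : y i = y 0 := by
      induction i using Fin.induction with
      | zero => rfl
      | succ i ih => rw [← adjacent, ih]
    exact fun i i' => (eq_zero i).trans (eq_zero i').symm
  · rw [show y = fun _ => y 0 from funext fun i => hy i 0]
    exact cullisForm_curryLeft_const h _

end CullisForm

theorem stmt2_general {F : Type*} [Field F] {n k : ℕ} (hk : 2 ≤ k) (hkn : k ≤ n)
    (hodd : Odd (n + k)) :
    {Y : Matrix (Fin n) (Fin k) F | ∀ (X : Matrix (Fin n) (Fin k) F) (l : F),
        cullisDet (X + l • Y) = cullisDet X} =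
      {Y : Matrix (Fin n) (Fin k) F | ∀ i i' : Fin n, Y i = Y i'} := by
  obtain ⟨k, rfl⟩ := Nat.exists_eq_add_of_le' (Nat.one_le_of_lt hk)
  have heven : Even (n + k) := by grind
  ext Y
  calc (∀ X (l : F), cullisDet (X + l • Y) = cullisDet X)
      ↔ ∀ x (l : F), cullisForm F n (k + 1) (x + l • Y.col) = cullisForm F n (k + 1) x := by
        simp only [cullisDet_eq_cullisForm_col]
        exact ⟨fun h x => h (Matrix.of x).transpose, fun h X => h X.col⟩
    _ ↔ ∀ j, (cullisForm F n (k + 1)).curryLeft (Y.col j) = 0 := forall_map_add_smul_eq_iff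
    _ ↔ ∀ j i i', Y i j = Y i' j :=
        forall_congr' fun _ =>
          cullisForm_curryLeft_eq_zero_iff (Nat.le_of_succ_le_succ hk) hkn heven
    _ ↔ ∀ i i', Y i = Y i' :=
        ⟨fun h i i' => funext fun j => h j i i', fun h j i i' => congrFun (h i i') j⟩

/-- Lemma 3.6: if `n + k` is odd then the radical of the Cullis determinant is
`W_{n,k}`, the set of matrices all of whose rows are equal. -/
theorem stmt2 {F : Type*} [Field F] {n k : ℕ} (hk : 2 ≤ k) (hkn : k ≤ n)
    (hodd : Odd (n + k)) (hF : (k : Cardinal) < Cardinal.mk F) :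
    {Y : Matrix (Fin n) (Fin k) F | ∀ (X : Matrix (Fin n) (Fin k) F) (l : F),
        cullisDet (X + l • Y) = cullisDet X} =
      {Y : Matrix (Fin n) (Fin k) F | ∀ i i' : Fin n, Y i = Y i'} :=
  stmt2_general hk hkn hodd
end

section
/- Let F be a field, let n > k ≥ 1 with n + k odd, and let T be a linear map on M_{n×k}(F) such that det_{n,k}(T(X)) = det_{n,k}(X) for all n×k matrices X over F. Define the linear map S on M_{(n-1)×k}(F) by S = L^- ∘ T ∘ L^+. Then det_{(n-1),k}(S(Y)) = det_{(n-1),k}(Y) for all (n−1)×k matrices Y over F. -/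
/-- `L⁻`: subtract the last row from the others and delete it. -/
def Lminus {F : Type*} [Field F] {n k : ℕ}
    (X : Matrix (Fin n) (Fin k) F) : Matrix (Fin (n - 1)) (Fin k) F :=
  fun i j => X ⟨i, by have := i.isLt; omega⟩ j - X ⟨n - 1, by have := i.isLt; omega⟩ j


/-- `L⁺`: append a zero row at the bottom. -/
def Lplus {F : Type*} [Field F] {n k : ℕ}
    (Y : Matrix (Fin (n - 1)) (Fin k) F) : Matrix (Fin n) (Fin k) F :=
  fun i j => if h : (i : ℕ) < n - 1 then Y ⟨i, h⟩ j else 0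

/-!
When `n + k` is odd, `det_{n,k}` is invariant under adding one and the same row vector to every row:
by multilinearity in the columns this amounts to its vanishing on matrices with a column of ones.
If that column is the last one, deleting it leaves the determinant unchanged for `n + k` even and
the determinant is zero for `n + k` odd; the two cases are proved together by induction on `n`,
using the Laplace expansion along the last row. Subtracting the last row from all rows therefore
does not change the determinant, and a zero last row can be deleted, so both `L⁻` and `L⁺` preserve
it.
-/

section StrictMono

variable {n k : ℕ}

theorem le_of_strictMono_fin {g : Fin k → Fin n} (hg : StrictMono g) : k ≤ n := by
  simpa using Fintype.card_le_of_injective g hg.injective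

theorem strictMono_snoc_iff {α : Type*} [Preorder α] {g : Fin k → α} {a : α} :
    StrictMono (Fin.snoc g a : Fin (k + 1) → α) ↔ StrictMono g ∧ ∀ i, g i < a := by
  constructor
  · intro h
    exact ⟨fun i j hij => by simpa using h (Fin.castSucc_lt_castSucc_iff.2 hij),
      fun i => by simpa using h (Fin.castSucc_lt_last i)⟩
  · rintro ⟨hg, ha⟩ i j hij
    induction j using Fin.lastCases with
    | last =>
      obtain ⟨i, rfl⟩ := Fin.exists_castSucc_eq.2 hij.ne
      simpa using ha i
    | cast j =>
      obtain ⟨i, rfl⟩ := Fin.exists_castSucc_eq.2 (hij.trans (Fin.castSucc_lt_last j)).ne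
      simpa using hg (Fin.castSucc_lt_castSucc_iff.1 hij)

theorem exists_castSucc_comp_eq {ι : Type*} {f : ι → Fin (n + 1)} (hf : ∀ i, f i ≠ Fin.last n) :
    ∃ g : ι → Fin n, Fin.castSucc ∘ g = f :=
  ⟨fun i => (f i).castPred (hf i), funext fun i => Fin.castSucc_castPred (f i) (hf i)⟩

open Classical in
theorem sum_strictMono_last_ne {M : Type*} [AddCommMonoid M]
    (φ : (Fin (k + 1) → Fin (n + 1)) → M) :
    ∑ f with StrictMono f ∧ f (Fin.last k) ≠ Fin.last n, φ f =
      ∑ g : Fin (k + 1) → Fin n with StrictMono g, φ (Fin.castSucc ∘ g) := by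
  symm
  refine Finset.sum_nbij (Fin.castSucc ∘ ·) (fun g hg => ?_)
    (Fin.castSucc_injective n).comp_left.injOn (fun f hf => ?_) fun _ _ => rfl
  · rw [Finset.mem_filter_univ] at hg ⊢
    exact ⟨Fin.strictMono_castSucc.comp hg, Fin.castSucc_ne_last _⟩
  · rw [Finset.mem_coe, Finset.mem_filter_univ] at hf
    obtain ⟨hf, hlast⟩ := hf
    obtain ⟨g, rfl⟩ := exists_castSucc_comp_eq fun i =>
      ((hf.monotone (Fin.le_last i)).trans_lt (Fin.lt_last_iff_ne_last.2 hlast)).ne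
    exact ⟨g, Finset.mem_coe.2 <| (Finset.mem_filter_univ g).2 fun _ _ hij => hf hij, rfl⟩

open Classical in
theorem sum_strictMono_last_eq {M : Type*} [AddCommMonoid M]
    (φ : (Fin (k + 1) → Fin (n + 1)) → M) :
    ∑ f with StrictMono f ∧ f (Fin.last k) = Fin.last n, φ f =
      ∑ g : Fin k → Fin n with StrictMono g, φ (Fin.snoc (Fin.castSucc ∘ g) (Fin.last n)) := by
  symm
  refine Finset.sum_nbij (fun g => Fin.snoc (Fin.castSucc ∘ g) (Fin.last n)) (fun g hg => ?_)
    (fun g _ g' _ h => (Fin.castSucc_injective n).comp_left (Fin.snoc_injective2 h).1)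
    (fun f hf => ?_) fun _ _ => rfl
  · rw [Finset.mem_filter_univ] at hg ⊢
    exact ⟨strictMono_snoc_iff.2
      ⟨Fin.strictMono_castSucc.comp hg, fun i => Fin.castSucc_lt_last (g i)⟩, Fin.snoc_last _ _⟩
  · rw [Finset.mem_coe, Finset.mem_filter_univ] at hf
    obtain ⟨hf, hlast⟩ := hf
    rw [← Fin.snoc_init_self f, hlast, strictMono_snoc_iff] at hf
    obtain ⟨hinit, hlt⟩ := hf
    obtain ⟨g, hg⟩ := exists_castSucc_comp_eq fun i => (hlt i).ne
    rw [← hg] at hinit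
    refine ⟨g, Finset.mem_coe.2 <| (Finset.mem_filter_univ g).2 fun _ _ hij => hinit hij, ?_⟩
    simp only [hg, ← hlast, Fin.snoc_init_self]

open Classical in
theorem sum_strictMono_succ {M : Type*} [AddCommMonoid M]
    (φ : (Fin (k + 1) → Fin (n + 1)) → M) :
    ∑ f with StrictMono f, φ f =
      ∑ g : Fin (k + 1) → Fin n with StrictMono g, φ (Fin.castSucc ∘ g) +
        ∑ g : Fin k → Fin n with StrictMono g,
          φ (Fin.snoc (Fin.castSucc ∘ g) (Fin.last n)) := by
  rw [← Finset.sum_filter_add_sum_filter_not _ (fun f => f (Fin.last k) ≠ Fin.last n)]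
  simp only [Finset.filter_filter, not_not, sum_strictMono_last_ne, sum_strictMono_last_eq]

end StrictMono

theorem det_submatrix_snoc {R m : Type*} {k : ℕ} [CommRing R] (X : Matrix m (Fin (k + 1)) R)
    (r : Fin k → m) (i : m) :
    (X.submatrix (Fin.snoc r i : Fin (k + 1) → m) id).det =
      ∑ j : Fin (k + 1), (-1) ^ (k + (j : ℕ)) * X i j * (X.submatrix r j.succAbove).det := by
  rw [Matrix.det_succ_row _ (Fin.last k)]
  refine Finset.sum_congr rfl fun j _ => ?_
  simp [Function.comp_def]

theorem multilinearMap_add_smul_of_map_eq_zero {R ι N : Type*} {M : ι → Type*} [CommSemiring R]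
    [∀ i, AddCommMonoid (M i)] [AddCommMonoid N] [∀ i, Module R (M i)] [Module R N] [Finite ι]
    (φ : MultilinearMap R M N) {e : ∀ i, M i} (he : ∀ x i, x i = e i → φ x = 0)
    (x : ∀ i, M i) (v : ι → R) : φ (x + fun i => v i • e i) = φ x := by
  classical
  have := Fintype.ofFinite ι
  rw [φ.map_add_univ, Finset.sum_eq_single Finset.univ, Finset.piecewise_univ]
  · intro s _ hs
    obtain ⟨i, hi⟩ : ∃ i, i ∉ s := by simpa [Finset.eq_univ_iff_forall] using hs
    rw [← Function.update_eq_self i (s.piecewise x fun i => v i • e i),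
      Finset.piecewise_eq_of_notMem s _ _ hi, φ.map_update_smul,
      he (Function.update _ i (e i)) i (by simp), smul_zero]
  · simp

section CullisDet

variable {F : Type*} [Field F] {n k : ℕ}

open Classical in
theorem cullisDet_eq_sum_strictMono (X : Matrix (Fin n) (Fin k) F) :
    cullisDet X = ∑ f : Fin k → Fin n with StrictMono f,
      (-1 : F) ^ (∑ j, ((f j : ℕ) - (j : ℕ))) * (X.submatrix f id).det := by
  rw [cullisDet, Finset.sum_filter]

theorem cullisDet_of_lt (X : Matrix (Fin n) (Fin k) F) (h : n < k) : cullisDet X = 0 :=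
  Finset.sum_eq_zero fun _ _ => if_neg fun hf => h.not_ge (le_of_strictMono_fin hf)

theorem cullisDet_zero_cols (X : Matrix (Fin n) (Fin 0) F) : cullisDet X = 1 := by
  simp [cullisDet, Subsingleton.strictMono]

theorem cullisDet_succ_row_last (X : Matrix (Fin (n + 1)) (Fin (k + 1)) F) :
    cullisDet X = cullisDet (X.submatrix Fin.castSucc id) +
      ∑ j : Fin (k + 1), (-1) ^ (n + (j : ℕ)) * X (Fin.last n) j *
        cullisDet (X.submatrix Fin.castSucc j.succAbove) := by
  classical
  simp only [cullisDet_eq_sum_strictMono, Finset.mul_sum, sum_strictMono_succ]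
  congr 1
  rw [Finset.sum_comm]
  refine Finset.sum_congr rfl fun g hg => ?_
  have hkn : k ≤ n := le_of_strictMono_fin (Finset.mem_filter_univ g |>.1 hg)
  have hsign : (-1 : F) ^ (n - k) * (-1) ^ k = (-1) ^ n := by
    rw [← pow_add, Nat.sub_add_cancel hkn]
  rw [det_submatrix_snoc, Finset.mul_sum]
  refine Finset.sum_congr rfl fun j _ => ?_
  simp only [Fin.sum_univ_castSucc, Fin.snoc_castSucc, Fin.snoc_last, Function.comp_apply,
    Fin.val_castSucc, Fin.val_last, Matrix.submatrix_submatrix, Function.comp_id, pow_add, ← hsign]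
  ring

theorem cullisDet_of_row_last_eq_zero (X : Matrix (Fin (n + 1)) (Fin k) F)
    (h : ∀ j, X (Fin.last n) j = 0) : cullisDet X = cullisDet (X.submatrix Fin.castSucc id) := by
  cases k with
  | zero => rw [cullisDet_zero_cols, cullisDet_zero_cols]
  | succ k => simp [cullisDet_succ_row_last X, h]

theorem cullisDet_of_col_last_eq_one (X : Matrix (Fin n) (Fin (k + 1)) F)
    (hX : ∀ i, X i (Fin.last k) = 1) :
    cullisDet X = if Odd (n + k) then cullisDet (X.submatrix id Fin.castSucc) else 0 := by
  induction n generalizing k with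
  | zero =>
    rw [cullisDet_of_lt X k.succ_pos]
    split_ifs with hk
    · exact (cullisDet_of_lt _ (by simpa using hk.pos)).symm
    · rfl
  | succ n ih =>
    rw [cullisDet_succ_row_last X, Fin.sum_univ_castSucc,
      ih (X.submatrix Fin.castSucc id) fun i => hX i.castSucc]
    cases k with
    | zero =>
      have hone : X (Fin.last n) 0 = 1 := hX (Fin.last n)
      rcases Nat.even_or_odd n with hn | hn <;>
        simp [cullisDet_zero_cols, hone, hn, hn.neg_one_pow, Nat.odd_add_one]
    | succ k =>
      have hminor (j : Fin (k + 1)) :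
          cullisDet (X.submatrix Fin.castSucc j.castSucc.succAbove) =
            if Odd (n + k) then cullisDet
              ((X.submatrix id Fin.castSucc).submatrix Fin.castSucc j.succAbove) else 0 := by
        rw [ih _ fun i => by simp [hX]]
        congr 2
        ext a b
        simp
      have hrow := cullisDet_succ_row_last (X.submatrix id Fin.castSucc)
      simp only [hminor, hX, Fin.succAbove_last]
      rcases Nat.even_or_odd (n + k) with heven | hodd
      · have hodd' : Odd (n + (k + 1)) := heven.add_one
        have heven' : ¬Odd (n + 1 + (k + 1)) := by grind
        simp [heven, hodd', hodd'.neg_one_pow, heven', Matrix.submatrix_submatrix]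
      · have heven' : Even (n + (k + 1)) := hodd.add_one
        have hodd' : Odd (n + 1 + (k + 1)) := by grind
        simp [hodd, heven', heven'.neg_one_pow, hodd', Matrix.submatrix_submatrix, hrow, add_comm]

variable (F n k) in
/-- The Cullis determinant as an alternating form in the `k` columns of an `n × k` matrix, which
makes the theory of multilinear and alternating maps applicable to it. -/
noncomputable def cullisDetColAlternating : (Fin n → F) [⋀^Fin k]→ₗ[F] F :=
  open Classical in
  ∑ f : Fin k → Fin n with StrictMono f, (-1 : F) ^ (∑ j, ((f j : ℕ) - (j : ℕ))) •
    Matrix.detRowAlternating.compLinearMap (LinearMap.funLeft F F f)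

theorem cullisDetColAlternating_col (X : Matrix (Fin n) (Fin k) F) :
    cullisDetColAlternating F n k X.col = cullisDet X := by
  let evalCol : ((Fin n → F) [⋀^Fin k]→ₗ[F] F) →+ F :=
    { toFun φ := φ X.col, map_zero' := rfl, map_add' _ _ := rfl }
  rw [cullisDet_eq_sum_strictMono]
  refine (map_sum evalCol _ _).trans (Finset.sum_congr rfl fun f _ => ?_)
  rw [← Matrix.det_transpose]
  rfl

theorem cullisDet_submatrix_perm (σ : Equiv.Perm (Fin k)) (X : Matrix (Fin n) (Fin k) F) :
    cullisDet (X.submatrix id σ) = Equiv.Perm.sign σ • cullisDet X := by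
  rw [← cullisDetColAlternating_col, ← cullisDetColAlternating_col X]
  exact (cullisDetColAlternating F n k).map_perm X.col σ

theorem cullisDet_eq_zero_of_col_eq_one (hodd : Odd (n + k)) (X : Matrix (Fin n) (Fin k) F)
    {p : Fin k} (hp : ∀ i, X i p = 1) : cullisDet X = 0 := by
  cases k with
  | zero => exact p.elim0
  | succ k =>
    have hparity : ¬Odd (n + k) := by grind
    have hswap := cullisDet_of_col_last_eq_one (X.submatrix id (Equiv.swap p (Fin.last k)))
      fun i => by simp [hp]
    rwa [if_neg hparity, cullisDet_submatrix_perm, smul_eq_zero_iff_eq] at hswap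

theorem cullisDet_add_replicateRow (hodd : Odd (n + k)) (X : Matrix (Fin n) (Fin k) F)
    (v : Fin k → F) : cullisDet (X + Matrix.replicateRow (Fin n) v) = cullisDet X := by
  have hvanish (Z : Fin k → Fin n → F) (p : Fin k) (hp : Z p = 1) :
      cullisDetColAlternating F n k Z = 0 :=
    (cullisDetColAlternating_col (Matrix.of Z).transpose).trans
      (cullisDet_eq_zero_of_col_eq_one hodd _ fun i => congrFun hp i)
  have hcols : (X + Matrix.replicateRow (Fin n) v).col =
      X.col + fun j => v j • (1 : Fin n → F) := by
    ext j i
    simp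
  rw [← cullisDetColAlternating_col, hcols, ← cullisDetColAlternating_col X]
  exact multilinearMap_add_smul_of_map_eq_zero
    (cullisDetColAlternating F n k).toMultilinearMap hvanish X.col v

theorem cullisDet_Lplus (Y : Matrix (Fin (n + 1 - 1)) (Fin k) F) :
    cullisDet (Lplus (n := n + 1) Y) = cullisDet Y := by
  rw [cullisDet_of_row_last_eq_zero _ fun j => by simp [Lplus]]
  congr 1
  ext i j
  simp [Lplus]

theorem cullisDet_Lminus (hodd : Odd (n + 1 + k)) (X : Matrix (Fin (n + 1)) (Fin k) F) :
    cullisDet (Lminus X) = cullisDet X := by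
  rw [← cullisDet_add_replicateRow hodd X (-X (Fin.last n)),
    cullisDet_of_row_last_eq_zero _ fun j => by simp]
  congr 1
  ext i j
  exact sub_eq_add_neg _ _

end CullisDet

theorem stmt8_general {F : Type*} [Field F] {n k : ℕ} (hkn : k < n) (hodd : Odd (n + k))
    (T : Matrix (Fin n) (Fin k) F → Matrix (Fin n) (Fin k) F)
    (hT : ∀ X, cullisDet (T X) = cullisDet X)
    (Y : Matrix (Fin (n - 1)) (Fin k) F) :
    cullisDet (Lminus (T (Lplus Y))) = cullisDet Y := by
  obtain ⟨n, rfl⟩ := Nat.exists_eq_add_one_of_ne_zero hkn.ne_bot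
  rw [cullisDet_Lminus hodd, hT, cullisDet_Lplus]

/-- Lemma 4.8: if `T` preserves `det_{n,k}` with `n + k` odd, then
`S = L⁻ ∘ T ∘ L⁺` preserves `det_{(n-1),k}`. -/
theorem stmt8 {F : Type*} [Field F] {n k : ℕ} (hk : 1 ≤ k) (hkn : k < n)
    (hodd : Odd (n + k))
    (T : Matrix (Fin n) (Fin k) F →ₗ[F] Matrix (Fin n) (Fin k) F)
    (hT : ∀ X, cullisDet (T X) = cullisDet X)
    (Y : Matrix (Fin (n - 1)) (Fin k) F) :
    cullisDet (Lminus (T (Lplus Y))) = cullisDet Y :=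
  stmt8_general hkn hodd T hT Y
end
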